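/- arXiv:2003.08083 — 2 statements merged into one kernel-verified Lean document; each statement's English description precedes it below -/
import Mathlib

section
/- Every integer greater than four can be written as the sum of two primes and a square-free number. -/
/-!
Subtract `p = 2` or `p = 3` to reach an even number `m`. For an odd prime `q < m` the number `m - q`
is odd, so if it is not square-free, then `q` lies in one residue class modulo `2 r ^ 2` for some
odd prime `r ≤ √m`.

Primes in a residue class modulo `d` satisfy a Chebyshev-type upper bound. The product of the first
`J` terms of the class is at most `d ^ J * J !` and is divisible by the part of `J !` coprime
to `d`; the primes exceeding `J` divide the cofactor. Hence the logarithms of the primes up to `m`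
in the class sum to at most about `m / d` times `log d + ∑ p ∣ d, log p / (p - 1)`.

If no `m - q` is square-free, summing this over `d = 2 r ^ 2` and bounding the primes up to `m / 18`
trivially yields `θ m ≤ (5 / 6 + 1 / 9) m log 2 + O(√m log m)`. For `m ≥ 10 ^ 6` this contradicts
Chebyshev's lower bound `θ m ≥ m log 2 - O(√m log m)`.

A number below `1002000` exceeds some prime by an amount in `[3, 2000)`, and each number in this
interval is the sum of a prime and a divisor of the primorial of `1000`.
-/

open Finset Real
open scoped Nat

theorem sum_biUnion_le_sum {ι α M : Type*} [DecidableEq α] [AddCommMonoid M] [PartialOrder M]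
    [IsOrderedAddMonoid M] {f : α → M} (s : Finset ι) (t : ι → Finset α) (hf : ∀ a, 0 ≤ f a) :
    ∑ a ∈ s.biUnion t, f a ≤ ∑ i ∈ s, ∑ a ∈ t i, f a := by
  classical
  induction s using Finset.induction_on with
  | empty => simp
  | insert i s hi ih =>
    calc ∑ a ∈ (insert i s).biUnion t, f a
        ≤ ∑ a ∈ t i ∪ s.biUnion t, f a + ∑ a ∈ t i ∩ s.biUnion t, f a := by
          rw [biUnion_insert]
          exact le_add_of_nonneg_right (sum_nonneg fun a _ => hf a)
      _ = ∑ a ∈ t i, f a + ∑ a ∈ s.biUnion t, f a := sum_union_inter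
      _ ≤ ∑ j ∈ insert i s, ∑ a ∈ t j, f a := by
          rw [sum_insert hi]
          exact add_le_add_right ih _

/-! ### Primes in a residue class -/

theorem dvd_prod_range_add_mul {K J d : ℕ} (b : ℕ) (hK : K ∣ J !) (hKd : K.Coprime d) :
    K ∣ ∏ j ∈ range J, (b + d * j) := by
  have hK0 : K ≠ 0 := ne_zero_of_dvd_ne_zero J.factorial_ne_zero hK
  obtain ⟨c, -, hc⟩ := Nat.exists_mul_mod_eq_of_coprime b hKd.symm hK0
  -- Modulo `K` the progression is `d` times the consecutive numbers `c + j`.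
  have hprod : ∏ j ∈ range J, (b + d * j) ≡ d ^ J * c.ascFactorial J [MOD K] := by
    calc ∏ j ∈ range J, (b + d * j) ≡ ∏ j ∈ range J, d * (c + j) [MOD K] :=
          Nat.ModEq.prod fun j _ => by
            rw [mul_add]
            exact Nat.ModEq.add_right _ hc.symm
      _ = d ^ J * c.ascFactorial J := by
          rw [prod_mul_distrib, prod_const, card_range, Nat.ascFactorial_eq_prod_range]
  exact (hprod.dvd_iff dvd_rfl).2
    ((hK.trans (Nat.factorial_dvd_ascFactorial c J)).mul_left _)

theorem exists_coprime_prod_primeFactors_mul_eq {n : ℕ} (hn : n ≠ 0) {d : ℕ} (hd : d ≠ 0) :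
    ∃ K, K.Coprime d ∧ (∏ p ∈ d.primeFactors, p ^ n.factorization p) * K = n := by
  refine ⟨∏ p ∈ n.primeFactors \ d.primeFactors, p ^ n.factorization p, ?_, ?_⟩
  · refine Nat.Coprime.prod_left fun p hp => Nat.Coprime.pow_left _ ?_
    obtain ⟨hpn, hpd⟩ := mem_sdiff.1 hp
    have hp_prime := Nat.prime_of_mem_primeFactors hpn
    exact hp_prime.coprime_iff_not_dvd.2 fun h => hpd (Nat.mem_primeFactors.2 ⟨hp_prime, h, hd⟩)
  · calc _ = ∏ p ∈ d.primeFactors ∪ n.primeFactors, p ^ n.factorization p := by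
            rw [← union_sdiff_self_eq_union, prod_union disjoint_sdiff]
      _ = ∏ p ∈ n.primeFactors, p ^ n.factorization p := by
            refine (prod_subset subset_union_right fun p _ hp => ?_).symm
            rw [Finsupp.notMem_support_iff.1 hp, pow_zero]
      _ = n := Nat.prod_factorization_pow_eq_self hn

theorem prod_range_add_mul_le {b d : ℕ} (hb : b ≤ d) (J : ℕ) :
    ∏ j ∈ range J, (b + d * j) ≤ d ^ J * J ! := by
  calc ∏ j ∈ range J, (b + d * j) ≤ ∏ j ∈ range J, d * (j + 1) :=
        prod_le_prod' fun j _ => by rw [mul_add_one, add_comm]; gcongr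
    _ = d ^ J * J ! := by
        rw [prod_mul_distrib, prod_const, card_range, prod_range_add_one_eq_factorial]

theorem prod_primes_progression_le {b d J : ℕ} (hb0 : 0 < b) (hb : b ≤ d) (S : Finset ℕ)
    (hS : ∀ q ∈ S, q.Prime ∧ J < q ∧ ∃ j < J, q = b + d * j) :
    ∏ q ∈ S, q ≤ d ^ J * ∏ p ∈ d.primeFactors, p ^ (J !).factorization p := by
  obtain ⟨K, hKd, hK⟩ :=
    exists_coprime_prod_primeFactors_mul_eq J.factorial_ne_zero (hb0.trans_le hb).ne'
  have hKJ : K ∣ J ! := Dvd.intro_left _ hK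
  have hS_dvd : ∏ q ∈ S, q ∣ ∏ j ∈ range J, (b + d * j) := by
    refine prod_primes_dvd _ (fun q hq => (hS q hq).1.prime) fun q hq => ?_
    obtain ⟨-, -, j, hj, rfl⟩ := hS q hq
    exact dvd_prod_of_mem (fun j => b + d * j) (mem_range.2 hj)
  have hSK : (∏ q ∈ S, q).Coprime K := by
    refine Nat.Coprime.prod_left fun q hq => Nat.Coprime.coprime_dvd_right hKJ ?_
    obtain ⟨hq_prime, hJq, -⟩ := hS q hq
    exact (Nat.coprime_factorial_iff hq_prime.ne_one).2 (by rwa [hq_prime.minFac_eq])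
  have hprod_pos : 0 < ∏ j ∈ range J, (b + d * j) := prod_pos fun j _ => by positivity
  refine Nat.le_of_mul_le_mul_right (c := K) ?_ (Nat.pos_of_dvd_of_pos hKJ J.factorial_pos)
  calc (∏ q ∈ S, q) * K ≤ ∏ j ∈ range J, (b + d * j) :=
        Nat.le_of_dvd hprod_pos
          (hSK.mul_dvd_of_dvd_of_dvd hS_dvd (dvd_prod_range_add_mul b hKJ hKd))
    _ ≤ d ^ J * J ! := prod_range_add_mul_le hb J
    _ = _ := by rw [mul_assoc, hK]

/-- An upper bound for the average contribution of one term of a residue class modulo `d` to the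
sum of `log q` over the primes `q` of the class: `log d` from the size of the terms, and the
remaining sum from the prime powers that divide `J !` but need not divide a product of `J` terms. -/
noncomputable def progressionWeight (d : ℕ) : ℝ :=
  log d + ∑ p ∈ d.primeFactors, log p / (p - 1)

theorem progressionWeight_nonneg (d : ℕ) : 0 ≤ progressionWeight d := by
  refine add_nonneg (log_natCast_nonneg d) (sum_nonneg fun p hp => ?_)
  have : (1 : ℝ) ≤ p := by exact_mod_cast (Nat.prime_of_mem_primeFactors hp).one_le
  exact div_nonneg (log_natCast_nonneg p) (sub_nonneg.2 this)

theorem log_factorization_factorial_le {p : ℕ} (hp : p.Prime) (J : ℕ) :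
    (J !).factorization p * log p ≤ J * (log p / (p - 1)) := by
  have : ((J !).factorization p : ℝ) ≤ J / (p - 1) := by
    calc ((J !).factorization p : ℝ) ≤ (J / (p - 1) : ℕ) := by
          exact_mod_cast Nat.factorization_factorial_le_div_pred hp J
      _ ≤ J / (p - 1) := by
          simpa [Nat.cast_sub hp.one_le] using Nat.cast_div_le (α := ℝ) (m := J) (n := p - 1)
  calc _ ≤ J / (p - 1) * log p := by gcongr
    _ = _ := by ring

theorem sum_log_primes_progression_le {b d J : ℕ} (hb0 : 0 < b) (hb : b ≤ d) (S : Finset ℕ)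
    (hS : ∀ q ∈ S, q.Prime ∧ J < q ∧ ∃ j < J, q = b + d * j) :
    ∑ q ∈ S, log q ≤ J * progressionWeight d := by
  have hprime : ∀ p ∈ d.primeFactors, p.Prime := fun p => Nat.prime_of_mem_primeFactors
  have hd : (d : ℝ) ≠ 0 := by exact_mod_cast (hb0.trans_le hb).ne'
  calc ∑ q ∈ S, log q = log ((∏ q ∈ S, q : ℕ) : ℝ) := by
        rw [Nat.cast_prod, log_prod fun q hq => by exact_mod_cast (hS q hq).1.ne_zero]
    _ ≤ log ((d ^ J * ∏ p ∈ d.primeFactors, p ^ (J !).factorization p : ℕ) : ℝ) := by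
        refine log_le_log ?_ (by exact_mod_cast prod_primes_progression_le hb0 hb S hS)
        exact_mod_cast prod_pos fun q hq => (hS q hq).1.pos
    _ = J * log d + ∑ p ∈ d.primeFactors, (J !).factorization p * log p := by
        have hpow : ∀ p ∈ d.primeFactors, (p : ℝ) ^ (J !).factorization p ≠ 0 := fun p hp =>
          pow_ne_zero _ (by exact_mod_cast (hprime p hp).ne_zero)
        push_cast
        rw [log_mul (pow_ne_zero _ hd) (prod_ne_zero_iff.2 hpow), log_prod hpow, log_pow]
        simp only [log_pow]
    _ ≤ J * log d + ∑ p ∈ d.primeFactors, J * (log p / (p - 1)) :=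
        add_le_add_right
          (sum_le_sum fun p hp => log_factorization_factorial_le (hprime p hp) J) _
    _ = J * progressionWeight d := by rw [progressionWeight, mul_add, mul_sum]

theorem sum_log_primes_modEq_le {d : ℕ} (hd : 0 < d) (a X : ℕ) :
    ∑ q ∈ Ioc (X / d + 1) X with q.Prime ∧ q ≡ a [MOD d], log q
      ≤ (X / d + 1 : ℕ) * progressionWeight d := by
  -- `b` is the representative of `a` in `[1, d]`.
  refine sum_log_primes_progression_le (b := (a + (d - 1)) % d + 1) (Nat.succ_pos _)
    (Nat.mod_lt _ hd) _ fun q hq => ?_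
  simp only [mem_filter, mem_Ioc] at hq
  obtain ⟨⟨hJq, hqX⟩, hq_prime, hqa⟩ := hq
  refine ⟨hq_prime, hJq, (q - 1) / d,
    Nat.lt_succ_of_le (Nat.div_le_div_right (by lia)), ?_⟩
  have hmod : (a + (d - 1)) % d = (q - 1) % d := by
    rw [← (hqa.add_right (d - 1) : _ % _ = _ % _),
      show q + (d - 1) = q - 1 + d by have := hq_prime.pos; lia, Nat.add_mod_right]
  have := Nat.mod_add_div (q - 1) d
  have := hq_prime.pos
  lia

/-! ### The moduli `2 * r ^ 2` -/

theorem progressionWeight_two_mul_sq {r : ℕ} (hr : r.Prime) (hr2 : r ≠ 2) :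
    progressionWeight (2 * r ^ 2) = 2 * log 2 + 2 * log r + log r / (r - 1) := by
  have hfac : (2 * r ^ 2).primeFactors = {2, r} := by
    rw [Nat.primeFactors_mul two_ne_zero (pow_ne_zero 2 hr.ne_zero),
      Nat.primeFactors_pow r two_ne_zero, Nat.prime_two.primeFactors, hr.primeFactors]
    rfl
  have hr0 : (r : ℝ) ≠ 0 := by exact_mod_cast hr.ne_zero
  rw [progressionWeight, hfac, sum_pair hr2.symm]
  push_cast
  rw [log_mul two_ne_zero (pow_ne_zero 2 hr0), log_pow]
  push_cast
  ring

theorem log_le_div_ten_mul_log_two {r a : ℕ} (hr : 0 < r) (h : r ^ 10 ≤ 2 ^ a) :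
    log r ≤ a / 10 * log 2 := by
  have hlog : log ((r : ℝ) ^ 10) ≤ log (2 ^ a) :=
    log_le_log (by positivity) (by exact_mod_cast h)
  rw [log_pow, log_pow] at hlog
  push_cast at hlog
  linarith

theorem progressionWeight_two_mul_sq_div_le {r a : ℕ} (hr : r.Prime) (hr2 : r ≠ 2)
    (h : r ^ 10 ≤ 2 ^ a) :
    progressionWeight (2 * r ^ 2) / (2 * r ^ 2)
      ≤ (1 + a / 10 + a / (20 * (r - 1))) / r ^ 2 * log 2 := by
  have hr1 : (0 : ℝ) < r - 1 := sub_pos.2 (by exact_mod_cast hr.one_lt)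
  have hr0 : (0 : ℝ) < r := by exact_mod_cast hr.pos
  have hlog := log_le_div_ten_mul_log_two hr.pos h
  rw [progressionWeight_two_mul_sq hr hr2]
  calc (2 * log 2 + 2 * log r + log r / (r - 1)) / (2 * r ^ 2)
      ≤ (2 * log 2 + 2 * (a / 10 * log 2) + a / 10 * log 2 / (r - 1)) / (2 * r ^ 2) := by gcongr
    _ = _ := by field_simp; ring

/-- Half of the integral of `(log t + log 2) / t ^ 2` over `t ≥ x`. It dominates the tail
`r > x` of the sum of `progressionWeight (2 * r ^ 2) / (2 * r ^ 2)` over odd primes `r`. -/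
noncomputable def weightTail (x : ℝ) : ℝ :=
  (log x + 1 + log 2) / (2 * x)

theorem weightTail_nonneg {x : ℝ} (hx : 1 ≤ x) : 0 ≤ weightTail x :=
  div_nonneg (by linarith [log_nonneg hx, log_pos one_lt_two]) (by linarith)

theorem le_weightTail_sub_weightTail {x : ℝ} (hx : 0 < x) :
    (log (x + 2) + log 2 - 2 / x) / (x * (x + 2)) ≤ weightTail x - weightTail (x + 2) := by
  have hlog_diff : log (x + 2) - 2 / x ≤ log x := by
    have : log ((x + 2) / x) ≤ (x + 2) / x - 1 := log_le_sub_one_of_pos (by positivity)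
    rw [log_div (by positivity) hx.ne', add_div, div_self hx.ne'] at this
    linarith
  calc (log (x + 2) + log 2 - 2 / x) / (x * (x + 2))
      = (log (x + 2) - 2 / x + 1 + log 2) / (2 * x) - weightTail (x + 2) := by
        rw [weightTail]; field_simp; ring
    _ ≤ weightTail x - weightTail (x + 2) := by
        simp only [weightTail]; gcongr

theorem weightTail_add_two_le {x : ℝ} (hx : 3 ≤ x) : weightTail (x + 2) ≤ weightTail x := by
  have hlog : 0 ≤ log (x + 2) := log_nonneg (by linarith)
  have hdiv : 2 / x ≤ 2 / 3 := by gcongr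
  have hnonneg : 0 ≤ (log (x + 2) + log 2 - 2 / x) / (x * (x + 2)) :=
    div_nonneg (by linarith [log_two_gt_d9]) (by positivity)
  linarith [le_weightTail_sub_weightTail (by linarith : 0 < x)]

theorem progressionWeight_div_add_weightTail_le {r : ℕ} (hr : r.Prime) {x : ℝ} (hx : 3 ≤ x)
    (hrx : r = x + 2) :
    progressionWeight (2 * r ^ 2) / (2 * r ^ 2) + weightTail (x + 2) ≤ weightTail x := by
  have hr2 : r ≠ 2 := by rintro rfl; push_cast at hrx; linarith
  have hlog : 2 * log 2 ≤ log (x + 2) := by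
    calc 2 * log 2 = log (2 ^ 2) := by rw [log_pow]; norm_num
      _ ≤ log (x + 2) := log_le_log (by norm_num) (by linarith)
  have hlog_two := log_two_gt_d9
  have hdiv : 2 / x ≤ 2 / 3 := by gcongr
  have hdiv_log : log (x + 2) / (x + 2 - 1) ≤ log (x + 2) / x := by
    gcongr
    · linarith
    · linarith
  rw [progressionWeight_two_mul_sq hr hr2, hrx]
  suffices (2 * log 2 + 2 * log (x + 2) + log (x + 2) / (x + 2 - 1)) / (2 * (x + 2) ^ 2)
      ≤ (log (x + 2) + log 2 - 2 / x) / (x * (x + 2)) by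
    linarith [le_weightTail_sub_weightTail (by linarith : 0 < x)]
  calc _ ≤ (2 * log 2 + 2 * log (x + 2) + log (x + 2) / x) / (2 * (x + 2) ^ 2) := by gcongr
    _ = (2 * x * (log (x + 2) + log 2) + log (x + 2)) / (2 * x * (x + 2) ^ 2) := by
      field_simp; ring
    _ ≤ (2 * (x + 2) * (log (x + 2) + log 2 - 2 / x)) / (2 * x * (x + 2) ^ 2) := by
      gcongr ?_ / _
      have : (x + 2) * (2 / x) = 2 + 2 * (2 / x) := by field_simp
      linarith
    _ = _ := by field_simp

theorem weightTail_23_le : weightTail 23 ≤ 31 / 200 * log 2 := by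
  have hlog : log (23 : ℕ) ≤ (46 : ℕ) / 10 * log 2 :=
    log_le_div_ten_mul_log_two (by norm_num) (by norm_num)
  push_cast at hlog
  rw [weightTail]
  linarith [log_two_gt_d9]

theorem sum_Icc_23_progressionWeight_div_le :
    ∑ r ∈ Icc 3 23 with r.Prime, progressionWeight (2 * r ^ 2) / (2 * r ^ 2)
      ≤ 339 / 500 * log 2 := by
  have hprimes : {r ∈ Icc 3 23 | r.Prime} = {3, 5, 7, 11, 13, 17, 19, 23} := by decide
  have hprime : ∀ r ∈ ({3, 5, 7, 11, 13, 17, 19, 23} : Finset ℕ), r.Prime ∧ r ≠ 2 := by decide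
  rw [hprimes]
  calc _ ≤ ∑ r ∈ ({3, 5, 7, 11, 13, 17, 19, 23} : Finset ℕ),
        (1 + (Nat.clog 2 (r ^ 10) : ℝ) / 10 + Nat.clog 2 (r ^ 10) / (20 * (r - 1))) / r ^ 2
          * log 2 :=
        sum_le_sum fun r hr => progressionWeight_two_mul_sq_div_le (hprime r hr).1 (hprime r hr).2
          (Nat.le_pow_clog one_lt_two _)
    _ ≤ 339 / 500 * log 2 := by
        rw [← sum_mul]
        gcongr
        norm_num

theorem sum_progressionWeight_div_add_weightTail_le {k : ℕ} (hk : 11 ≤ k) :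
    ∑ r ∈ Icc 3 (2 * k + 1) with r.Prime, progressionWeight (2 * r ^ 2) / (2 * r ^ 2)
      + weightTail (2 * k + 1) ≤ 5 / 6 * log 2 := by
  induction k, hk using Nat.le_induction with
  | base =>
    have hbase := sum_Icc_23_progressionWeight_div_le
    rw [show (2 * (11 : ℕ) + 1 : ℝ) = 23 by norm_num]
    linarith [weightTail_23_le, log_two_gt_d9]
  | succ k hk ih =>
    have hk3 : 3 ≤ (2 * k + 1 : ℝ) := by norm_cast; lia
    have hIcc : Icc 3 (2 * (k + 1) + 1) =
        insert (2 * k + 3) (insert (2 * k + 2) (Icc 3 (2 * k + 1))) := by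
      ext r; simp only [mem_insert, mem_Icc]; lia
    have heven : ¬(2 * k + 2).Prime :=
      Nat.not_prime_of_dvd_of_lt (dvd_add (dvd_mul_right 2 k) dvd_rfl) le_rfl (by lia)
    rw [hIcc, filter_insert, filter_insert, if_neg heven,
      show (2 * (k + 1 : ℕ) + 1 : ℝ) = 2 * k + 1 + 2 by push_cast; ring]
    split_ifs with hprime
    · rw [sum_insert (by simp)]
      linarith [progressionWeight_div_add_weightTail_le hprime hk3 (by push_cast; ring)]
    · linarith [weightTail_add_two_le hk3]

theorem sum_progressionWeight_div_le (N : ℕ) :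
    ∑ r ∈ Icc 3 N with r.Prime, progressionWeight (2 * r ^ 2) / (2 * r ^ 2)
      ≤ 5 / 6 * log 2 := by
  have hsub : {r ∈ Icc 3 N | r.Prime} ⊆ {r ∈ Icc 3 (2 * (N + 11) + 1) | r.Prime} :=
    filter_subset_filter _ (Icc_subset_Icc_right (by lia))
  have hle := sum_progressionWeight_div_add_weightTail_le (Nat.le_add_left 11 N)
  have htail : 0 ≤ weightTail (2 * (N + 11 : ℕ) + 1) := by
    refine weightTail_nonneg ?_
    norm_cast; lia
  calc _ ≤ _ := sum_le_sum_of_subset_of_nonneg hsub fun r _ _ =>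
        div_nonneg (progressionWeight_nonneg _) (by positivity)
    _ ≤ 5 / 6 * log 2 := by linarith

theorem card_odd_primes_le (N : ℕ) : #{r ∈ Icc 3 N | r.Prime} ≤ N / 2 := by
  calc #{r ∈ Icc 3 N | r.Prime} ≤ #(Icc 1 (N / 2)) := by
        refine card_le_card_of_injOn (· / 2) (fun r hr => ?_) fun r hr s hs hrs => ?_
        · have := mem_Icc.1 (mem_filter.1 hr).1
          exact mem_coe.2 (mem_Icc.2 (by dsimp only; lia))
        · have hodd : ∀ r ∈ {r ∈ Icc 3 N | r.Prime}, r % 2 = 1 := fun r hr => by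
            obtain ⟨hr_mem, hr_prime⟩ := mem_filter.1 hr
            exact Nat.odd_iff.1 (hr_prime.odd_of_ne_two (by have := mem_Icc.1 hr_mem; lia))
          have := hodd r hr
          have := hodd s hs
          dsimp only at hrs
          lia
    _ = N / 2 := by rw [Nat.card_Icc, Nat.add_sub_cancel]

theorem sum_progressionWeight_le (N : ℕ) :
    ∑ r ∈ Icc 3 N with r.Prime, progressionWeight (2 * r ^ 2)
      ≤ N / 2 * (2 * log 2 + 2 * log N + 1) := by
  have hweight : ∀ r ∈ {r ∈ Icc 3 N | r.Prime},
      progressionWeight (2 * r ^ 2) ≤ 2 * log 2 + 2 * log N + 1 := fun r hr => by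
    obtain ⟨hr_mem, hr_prime⟩ := mem_filter.1 hr
    obtain ⟨hr3, hrN⟩ := mem_Icc.1 hr_mem
    have hr0 : (0 : ℝ) < r := by exact_mod_cast hr_prime.pos
    have hlog : log r ≤ log N := log_le_log hr0 (by exact_mod_cast hrN)
    have hr1 : (0 : ℝ) < r - 1 := sub_pos.2 (by exact_mod_cast hr_prime.one_lt)
    have hdiv : log r / (r - 1) ≤ 1 := (div_le_one hr1).2 (log_le_sub_one_of_pos hr0)
    rw [progressionWeight_two_mul_sq hr_prime (by lia)]
    linarith
  calc _ ≤ #{r ∈ Icc 3 N | r.Prime} • (2 * log 2 + 2 * log N + 1) :=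
        sum_le_card_nsmul _ _ _ hweight
    _ ≤ N / 2 * (2 * log 2 + 2 * log N + 1) := by
        rw [nsmul_eq_mul]
        have := log_natCast_nonneg N
        gcongr
        calc (#{r ∈ Icc 3 N | r.Prime} : ℝ) ≤ (N / 2 : ℕ) := by
              exact_mod_cast card_odd_primes_le N
          _ ≤ N / 2 := Nat.cast_div_le

theorem sum_div_add_one_mul_progressionWeight_le (m N : ℕ) :
    ∑ r ∈ Icc 3 N with r.Prime, (m / (2 * r ^ 2) + 1 : ℕ) * progressionWeight (2 * r ^ 2)
      ≤ m * (5 / 6 * log 2) + N / 2 * (2 * log 2 + 2 * log N + 1) := by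
  have hterm : ∀ r : ℕ, (m / (2 * r ^ 2) + 1 : ℕ) * progressionWeight (2 * r ^ 2)
      ≤ m * (progressionWeight (2 * r ^ 2) / (2 * r ^ 2)) + progressionWeight (2 * r ^ 2) :=
    fun r => by
      have hdiv : ((m / (2 * r ^ 2) : ℕ) : ℝ) ≤ m / (2 * r ^ 2) := by
        exact_mod_cast Nat.cast_div_le (α := ℝ) (m := m) (n := 2 * r ^ 2)
      calc (m / (2 * r ^ 2) + 1 : ℕ) * progressionWeight (2 * r ^ 2)
          ≤ (m / (2 * r ^ 2) + 1) * progressionWeight (2 * r ^ 2) := by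
            push_cast
            gcongr
            exact progressionWeight_nonneg _
        _ = _ := by ring
  calc _ ≤ ∑ r ∈ Icc 3 N with r.Prime,
        (m * (progressionWeight (2 * r ^ 2) / (2 * r ^ 2)) + progressionWeight (2 * r ^ 2)) :=
        sum_le_sum fun r _ => hterm r
    _ ≤ _ := by
        rw [sum_add_distrib, ← mul_sum]
        gcongr
        · exact sum_progressionWeight_div_le N
        · exact sum_progressionWeight_le N

/-! ### Large even numbers -/

theorem exists_prime_modEq_of_not_squarefree_sub {m q : ℕ} (hm : Even m) (hq : Odd q) (hqm : q ≤ m)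
    (h : ¬Squarefree (m - q)) :
    ∃ r ∈ Icc 3 m.sqrt, r.Prime ∧ q ≡ m + r ^ 2 [MOD 2 * r ^ 2] := by
  obtain ⟨r, hr_prime, k, hk⟩ : ∃ r, r.Prime ∧ r * r ∣ m - q := by
    simpa [Nat.squarefree_iff_prime_squarefree] using h
  have hodd : Odd (r * r * k) := hk ▸ Nat.Even.sub_odd hqm hm hq
  obtain ⟨hrr_odd, l, hl⟩ := Nat.odd_mul.1 hodd
  have hr_odd : Odd r := (Nat.odd_mul.1 hrr_odd).1
  have hr_three : 3 ≤ r := by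
    obtain ⟨i, rfl⟩ := hr_odd
    have := hr_prime.two_le
    lia
  have hrr : r * r ≤ m := by
    calc r * r ≤ r * r * k := Nat.le_mul_of_pos_right _ (by lia)
      _ ≤ m := hk ▸ Nat.sub_le m q
  refine ⟨r, mem_Icc.2 ⟨hr_three, Nat.le_sqrt.2 hrr⟩, hr_prime, ?_⟩
  refine (Nat.modEq_iff_dvd' (by lia)).2 ⟨l + 1, ?_⟩
  calc m + r ^ 2 - q = r * r * k + r ^ 2 := by lia
    _ = 2 * r ^ 2 * (l + 1) := by rw [hl]; ring

theorem theta_le_theta_add_sum_of_forall_not_squarefree_sub {m : ℕ} (hm : Even m) (hm18 : 18 ≤ m)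
    (h : ∀ q, q.Prime → q < m → ¬Squarefree (m - q)) :
    Chebyshev.theta m ≤ Chebyshev.theta (m / 18 + 1 : ℕ)
      + ∑ r ∈ Icc 3 m.sqrt with r.Prime,
          (m / (2 * r ^ 2) + 1 : ℕ) * progressionWeight (2 * r ^ 2) := by
  have hsplit : Chebyshev.theta m = Chebyshev.theta (m / 18 + 1 : ℕ)
      + ∑ q ∈ Ioc (m / 18 + 1) m with q.Prime, log q := by
    rw [Chebyshev.theta, Chebyshev.theta, Nat.floor_natCast, Nat.floor_natCast, sum_filter,
      sum_filter, sum_filter, sum_Ioc_consecutive _ (Nat.zero_le _) (by lia)]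
  -- `18 = 2 * 3 ^ 2` is the smallest modulus, so these primes exceed the size of each class.
  have hcover : {q ∈ Ioc (m / 18 + 1) m | q.Prime} ⊆
      {r ∈ Icc 3 m.sqrt | r.Prime}.biUnion fun r =>
        {q ∈ Ioc (m / (2 * r ^ 2) + 1) m | q.Prime ∧ q ≡ m + r ^ 2 [MOD 2 * r ^ 2]} := by
    intro q hq
    obtain ⟨hq_mem, hq_prime⟩ := mem_filter.1 hq
    obtain ⟨hq_gt, hq_le⟩ := mem_Ioc.1 hq_mem
    have hq_odd : Odd q := hq_prime.odd_of_ne_two (by lia)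
    have hqm : q < m := hq_le.lt_of_ne fun hqm => (Nat.not_even_iff_odd.2 hq_odd) (hqm ▸ hm)
    obtain ⟨r, hr, hr_prime, hqr⟩ :=
      exists_prime_modEq_of_not_squarefree_sub hm hq_odd hq_le (h q hq_prime hqm)
    have hr_sq : 3 ^ 2 ≤ r ^ 2 := Nat.pow_le_pow_left (mem_Icc.1 hr).1 2
    have hdiv : m / (2 * r ^ 2) ≤ m / 18 := Nat.div_le_div_left (by lia) (by norm_num)
    exact mem_biUnion.2 ⟨r, mem_filter.2 ⟨hr, hr_prime⟩,
      mem_filter.2 ⟨mem_Ioc.2 ⟨by lia, hq_le⟩, hq_prime, hqr⟩⟩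
  have hlog : ∀ q : ℕ, 0 ≤ log q := fun q => log_natCast_nonneg q
  rw [hsplit]
  refine add_le_add_right ?_ _
  calc ∑ q ∈ Ioc (m / 18 + 1) m with q.Prime, log q ≤ _ :=
        sum_le_sum_of_subset_of_nonneg hcover fun q _ _ => hlog q
    _ ≤ _ := sum_biUnion_le_sum _ _ hlog
    _ ≤ _ := sum_le_sum fun r hr =>
        sum_log_primes_modEq_le (by have := (mem_filter.1 hr).2.pos; positivity) _ m

theorem theta_le_of_forall_not_squarefree_sub {m : ℕ} (hm : Even m) (hm18 : 18 ≤ m)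
    (h : ∀ q, q.Prime → q < m → ¬Squarefree (m - q)) :
    Chebyshev.theta m ≤ log 4 * (m / 18 + 1) + m * (5 / 6 * log 2)
      + √m / 2 * (2 * log 2 + log m + 1) := by
  have hm0 : (0 : ℝ) < m := by norm_cast; lia
  have htheta : Chebyshev.theta (m / 18 + 1 : ℕ) ≤ log 4 * (m / 18 + 1) := by
    calc Chebyshev.theta (m / 18 + 1 : ℕ) ≤ log 4 * (m / 18 + 1 : ℕ) :=
          Chebyshev.theta_le_log4_mul_x (Nat.cast_nonneg _)
      _ ≤ log 4 * (m / 18 + 1) := by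
          have : 0 ≤ log 4 := log_nonneg (by norm_num)
          push_cast
          gcongr
          exact Nat.cast_div_le
  have hsqrt_pos : (0 : ℝ) < m.sqrt := by norm_cast; exact Nat.sqrt_pos.2 (by lia)
  have hsqrt : (m.sqrt : ℝ) ≤ √m := nat_sqrt_le_real_sqrt
  have hlog_sqrt : 2 * log m.sqrt ≤ log m := by
    calc 2 * log m.sqrt ≤ 2 * log √m :=
          mul_le_mul_of_nonneg_left (log_le_log hsqrt_pos hsqrt) zero_le_two
      _ = log m := by rw [log_sqrt hm0.le]; ring
  have hsum : (m.sqrt : ℝ) / 2 * (2 * log 2 + 2 * log m.sqrt + 1)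
      ≤ √m / 2 * (2 * log 2 + log m + 1) := by
    have := log_pos one_lt_two
    have := log_natCast_nonneg m
    gcongr
  linarith [theta_le_theta_add_sum_of_forall_not_squarefree_sub hm hm18 h,
    sum_div_add_one_mul_progressionWeight_le m m.sqrt]

theorem log_le_div_thousand_add {s : ℝ} (hs : 0 < s) : log s ≤ s / 1000 + 10 * log 2 - 1 := by
  have hlog : log (1000 : ℕ) ≤ (100 : ℕ) / 10 * log 2 :=
    log_le_div_ten_mul_log_two (by norm_num) (by norm_num)
  have hdiv : log (s / 1000) ≤ s / 1000 - 1 := log_le_sub_one_of_pos (by positivity)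
  rw [log_div hs.ne' (by norm_num)] at hdiv
  push_cast at hlog
  linarith

theorem exists_prime_lt_squarefree_sub {m : ℕ} (hm : Even m) (hm_ge : 10 ^ 6 ≤ m) :
    ∃ q, q.Prime ∧ q < m ∧ Squarefree (m - q) := by
  by_contra! h
  obtain ⟨s, hs⟩ : ∃ s, s = √(m : ℝ) := ⟨_, rfl⟩
  have hm_ge' : (10 ^ 6 : ℝ) ≤ m := by exact_mod_cast hm_ge
  have hs_ge : 1000 ≤ s := hs ▸ le_sqrt_of_sq_le (by linarith)
  have hs_sq : (m : ℝ) = s ^ 2 := by rw [hs, sq_sqrt (Nat.cast_nonneg m)]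
  have hlog_four : log 4 = 2 * log 2 := by
    rw [show (4 : ℝ) = 2 ^ 2 by norm_num, log_pow]; norm_num
  have hlog_m : log m = 2 * log s := by rw [hs_sq, log_pow]; norm_num
  have hlog_succ : log (m + 1) ≤ 4 * log s := by
    calc log (m + 1) ≤ log (s ^ 4) := log_le_log (by positivity) (by nlinarith)
      _ = 4 * log s := by rw [log_pow]; norm_num
  have hlog_s := log_le_div_thousand_add (by linarith : 0 < s)
  have hupper := theta_le_of_forall_not_squarefree_sub hm (by lia) h
  have hlower := Chebyshev.theta_ge m
  have hchain : log 2 / 18 * s ^ 2 ≤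
    5 * s * log s + s * (log 2 + 1 / 2) + 4 * log s + 2 * log 2 := by
    rw [← hs, hlog_m, hs_sq, hlog_four] at hupper
    rw [← hs, hlog_m, hs_sq] at hlower
    rw [hs_sq] at hlog_succ
    linarith
  nlinarith [log_two_gt_d9, log_two_lt_d9]

/-! ### Small numbers -/

theorem prime_of_coprime_primorial {n k : ℕ} (hn : 1 < n) (hnk : n < (k + 1) ^ 2)
    (h : n.Coprime (primorial k)) : n.Prime := by
  by_contra hn_prime
  have hmin : n.minFac.Prime := Nat.minFac_prime hn.ne'
  have hle : n.minFac ≤ k := by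
    have := (Nat.minFac_sq_le_self (by lia) hn_prime).trans_lt hnk
    exact Nat.lt_succ_iff.1 (lt_of_pow_lt_pow_left₀ 2 (Nat.zero_le _) this)
  exact Nat.not_coprime_of_dvd_of_dvd hmin.one_lt n.minFac_dvd (hmin.dvd_primorial_iff.2 hle) h

theorem coprime_primorial_iff {n : ℕ} (hn : n ≠ 0) :
    (n + 1).Coprime (primorial n) ↔ (n + 1).Prime := by
  refine ⟨prime_of_coprime_primorial (by lia) (lt_self_pow₀ (by lia) one_lt_two), fun h => ?_⟩
  exact h.coprime_iff_not_dvd.2 fun hdvd => (h.dvd_primorial_iff.1 hdvd).not_gt n.lt_succ_self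

theorem primorial_add_one (n : ℕ) :
    primorial (n + 1) = if (n + 1).Prime then (n + 1) * primorial n else primorial n := by
  rw [primorial_eq_prod_primesLE, Nat.primesLE_succ]
  split_ifs
  · rw [prod_insert (Nat.notMem_primesLE n), ← primorial_eq_prod_primesLE]
  · rfl

/-- The primorial, computed by a recursion that tests primality through a `gcd` with the product
accumulated so far. Unlike `primorial`, it evaluates fast in the kernel. -/
def primorialSieve : ℕ → ℕ
  | 0 => 1
  | n + 1 =>
    if (n + 1).Coprime (primorialSieve n) then (n + 1) * primorialSieve n else primorialSieve n

theorem primorialSieve_eq_primorial (n : ℕ) : primorialSieve n = primorial n := by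
  induction n with
  | zero => rfl
  | succ n ih =>
    rcases eq_or_ne n 0 with rfl | hn
    · decide
    · simp only [primorialSieve, ih, coprime_primorial_iff hn, primorial_add_one]

set_option maxRecDepth 10000 in
theorem exists_prime_mem_Ico_thousand_mul {i : ℕ} (hi : i < 1000) :
    ∃ q ∈ Ico (1000 * (i + 1)) (1000 * (i + 1) + 120), q.Prime := by
  -- `∃ j < 120` would be decided more slowly.
  have hcoprime : ∀ i < 1000, ∃ j ∈ List.range 120,
      (1000 * (i + 1) + j).Coprime (primorialSieve 1000) := by decide +kernel
  obtain ⟨j, hj, hij⟩ := hcoprime i hi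
  have hj_lt : j < 120 := List.mem_range.1 hj
  refine ⟨1000 * (i + 1) + j, mem_Ico.2 ⟨by lia, by lia⟩, ?_⟩
  exact prime_of_coprime_primorial (k := 1000) (by lia) (by lia)
    (primorialSieve_eq_primorial 1000 ▸ hij)

set_option maxRecDepth 10000 in
theorem exists_prime_add_squarefree {t : ℕ} (ht : t ∈ Ico 3 2000) :
    ∃ p k, p.Prime ∧ Squarefree k ∧ t = p + k := by
  have hdvd : ∀ t ∈ List.range' 3 1997, ∃ p ∈ List.range 24,
      p ≤ t ∧ t - p ∣ primorialSieve 1000 ∧ p.Prime := by decide +kernel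
  obtain ⟨p, -, hpt, hk, hp⟩ := hdvd t (List.mem_range'_1.2 (by simpa using ht))
  rw [primorialSieve_eq_primorial] at hk
  exact ⟨p, t - p, hp, (squarefree_primorial 1000).squarefree_of_dvd hk, by lia⟩

theorem exists_prime_sub_mem_Ico {n : ℕ} (hn : 4 < n) (hn_lt : n < 1002000) :
    ∃ q, q.Prime ∧ n - q ∈ Ico 3 2000 := by
  rcases lt_or_ge n 2002 with hsmall | hlarge
  · exact ⟨2, Nat.prime_two, mem_Ico.2 ⟨by lia, by lia⟩⟩
  · obtain ⟨q, hq_mem, hq⟩ := exists_prime_mem_Ico_thousand_mul (i := n / 1000 - 2) (by lia)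
    obtain ⟨hq_ge, hq_lt⟩ := mem_Ico.1 hq_mem
    exact ⟨q, hq, mem_Ico.2 ⟨by lia, by lia⟩⟩

/-- Every integer greater than four can be written as the sum of two primes and a
square-free number. -/
theorem two_primes_add_squarefree (n : ℕ) (hn : 4 < n) :
    ∃ p q k : ℕ, p.Prime ∧ q.Prime ∧ Squarefree k ∧ n = p + q + k := by
  rcases lt_or_ge n 1002000 with hsmall | hlarge
  · obtain ⟨q, hq, hnq⟩ := exists_prime_sub_mem_Ico hn hsmall
    obtain ⟨p, k, hp, hk, hsum⟩ := exists_prime_add_squarefree hnq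
    exact ⟨p, q, k, hp, hq, hk, by have := hp.pos; lia⟩
  · obtain ⟨p, hp, hp_le, heven⟩ : ∃ p, p.Prime ∧ p ≤ 3 ∧ Even (n - p) := by
      rcases n.even_or_odd with hn_even | hn_odd
      · exact ⟨2, Nat.prime_two, by lia, hn_even.tsub even_two⟩
      · exact ⟨3, Nat.prime_three, le_rfl, Nat.Odd.sub_odd hn_odd (by decide)⟩
    obtain ⟨q, hq, hqm, hk⟩ := exists_prime_lt_squarefree_sub heven (by lia)
    exact ⟨p, q, n - p - q, hp, hq, hk, by lia⟩
end

section
/- Every even integer greater than three can be written as the sum of a prime and an odd square-free number. -/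
/-!
Suppose that `n` is even and that `n - p` fails to be square-free for every odd prime `p ≤ n`. Then
some odd prime `q ≤ √n` has `n - p = q ^ 2 * t` with `t` odd, so `p ≡ n + q ^ 2` modulo `2 * q ^ 2`:
the odd primes up to `n` are covered by one residue class modulo `D = 2 * q ^ 2` for each `q`.

The primes of a residue class are few, by Chebyshev's argument for binomial coefficients: the
product of the first `m` terms of the progression is at most `D ^ m * m!` and is divisible both by
the part of `m!` coprime to `D` and by the primes `p > m` among the terms, so these primes
contribute at most about `m * (log D + ∑ log p / (p - 1))` to `θ`, the sum running over the primes
`p ∣ D`. Applied twice, to `x / D` and to `x / D ^ 2`, this bounds the classes together by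
`0.632 n + O(√n)`, which is less than Chebyshev's lower bound `θ n ≥ n log 2 - O(√n log n)` as soon
as `n ≥ 2 ^ 19`. Below that, one of the primes up to `17` always leaves a square-free difference,
which is verified by a sieve operating on the binary digits of large numbers.
-/

open Finset Real

lemma exists_odd_prime_sq_dvd_of_not_squarefree {k : ℕ} (hk : Odd k) (h : ¬Squarefree k) :
    ∃ q : ℕ, q.Prime ∧ Odd q ∧ q ^ 2 ∣ k := by
  rw [Nat.squarefree_iff_prime_squarefree] at h
  push Not at h
  obtain ⟨q, hq, hqk⟩ := h
  exact ⟨q, hq, hk.of_dvd_nat (dvd_of_mul_left_dvd hqk), sq q ▸ hqk⟩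

/-! ### A sieve on binary digits -/

/-- The set of multiples of `d` below `d * M`, encoded by the binary digits of a natural number:
a geometric series with ratio `2 ^ d`. -/
def multiplesMask (d M : ℕ) : ℕ := (2 ^ (d * M) - 1) / (2 ^ d - 1)

/-- The set of multiples of the members of `ds`, encoded by binary digits and meaningful for
digits up to `N`. -/
def sieveMask (N : ℕ) (ds : List ℕ) : ℕ :=
  ds.foldr (fun d b ↦ multiplesMask d (N / d + 1) ||| b) 0

/-- For sets `B` and `E` encoded by binary digits, the set of those `n` in `E` that are not of the
form `p + k` with `p` in `ps` and `k` outside `B`. -/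
def exceptionMask (B E : ℕ) (ps : List ℕ) : ℕ :=
  ps.foldr (fun p e ↦ (B <<< p ||| (2 ^ p - 1)) &&& e) E

lemma multiplesMask_succ {d : ℕ} (hd : 0 < d) (M : ℕ) :
    multiplesMask d (M + 1) = 2 ^ d * multiplesMask d M + 1 := by
  have h2 : 2 ≤ 2 ^ d := Nat.le_self_pow hd.ne' 2
  simp only [multiplesMask, pow_mul, ← Nat.geomSum_eq h2, geom_sum_succ]

lemma testBit_multiplesMask {d : ℕ} (hd : 0 < d) (M i : ℕ) :
    (multiplesMask d M).testBit i ↔ d ∣ i ∧ i < d * M := by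
  induction M generalizing i with
  | zero => simp [multiplesMask]
  | succ M ih =>
    rw [multiplesMask_succ hd, Nat.testBit_two_pow_mul_add _ (Nat.one_lt_two_pow hd.ne')]
    split_ifs with hi
    · rw [Nat.testBit_one_eq_true_iff_self_eq_zero]
      refine ⟨?_, fun h ↦ Nat.eq_zero_of_dvd_of_lt h.1 hi⟩
      rintro rfl
      exact ⟨dvd_zero d, by positivity⟩
    · rw [ih, Nat.dvd_sub_iff_left (not_lt.mp hi) dvd_rfl, mul_add_one]
      omega

lemma testBit_sieveMask {N i : ℕ} {ds : List ℕ} (hds : ∀ d ∈ ds, 0 < d) (hi : i ≤ N) :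
    (sieveMask N ds).testBit i ↔ ∃ d ∈ ds, d ∣ i := by
  induction ds with
  | nil => simp [sieveMask]
  | cons d ds ih =>
    obtain ⟨hd, hds⟩ := List.forall_mem_cons.mp hds
    have hlt : i < d * (N / d + 1) := hi.trans_lt (Nat.lt_mul_div_succ N hd)
    rw [sieveMask, List.foldr_cons, ← sieveMask, Nat.testBit_or, Bool.or_eq_true,
      testBit_multiplesMask hd, ih hds, List.exists_mem_cons_iff, and_iff_left hlt]

lemma testBit_exceptionMask (B E : ℕ) (ps : List ℕ) (n : ℕ) :
    (exceptionMask B E ps).testBit n ↔ E.testBit n ∧ ∀ p ∈ ps, p ≤ n → B.testBit (n - p) := by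
  induction ps with
  | nil => simp [exceptionMask]
  | cons p ps ih =>
    have hp : (B <<< p ||| (2 ^ p - 1)).testBit n ↔ (p ≤ n → B.testBit (n - p)) := by
      rw [Nat.testBit_or, Nat.testBit_shiftLeft, Nat.testBit_two_pow_sub_one]
      grind
    rw [exceptionMask, List.foldr_cons, ← exceptionMask, Nat.testBit_and, Bool.and_eq_true, hp, ih,
      List.forall_mem_cons, and_left_comm]

/-- The squares of the first `s` odd numbers from `3` on: an odd number that is not square-free is a
multiple of one of them, for `s` large enough. -/
def oddSquares (s : ℕ) : List ℕ := (List.range s).map fun i ↦ (2 * i + 3) ^ 2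

-- The value `5` encodes the set `{0, 2}`; the bases of the `361` squares run up to `723`, and
-- `725 ^ 2` exceeds `2 ^ 19`.
lemma exceptionMask_eq_five :
    exceptionMask (sieveMask (2 ^ 19) (oddSquares 361)) (multiplesMask 2 (2 ^ 18 + 1))
      [3, 5, 7, 11, 13, 17] = 5 := by
  decide +kernel

lemma testBit_sieveMask_oddSquares {k : ℕ} (hk : k ≤ 2 ^ 19) (hodd : Odd k)
    (h : ¬Squarefree k) : (sieveMask (2 ^ 19) (oddSquares 361)).testBit k := by
  have hpos : ∀ d ∈ oddSquares 361, 0 < d := by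
    simp only [oddSquares, List.forall_mem_map]
    exact fun i _ ↦ by positivity
  obtain ⟨q, hq, ⟨i, rfl⟩, hqk⟩ := exists_odd_prime_sq_dvd_of_not_squarefree hodd h
  have hi : i ≠ 0 := by
    rintro rfl
    exact hq.ne_one rfl
  have hle : (2 * i + 1) ^ 2 ≤ 2 ^ 19 := (Nat.le_of_dvd hodd.pos hqk).trans hk
  refine (testBit_sieveMask hpos hk).mpr ⟨_, List.mem_map.mpr ⟨i - 1, ?_, rfl⟩, ?_⟩
  · rw [List.mem_range]
    have : 2 * i + 1 < 725 := lt_of_pow_lt_pow_left₀ 2 (by lia) (hle.trans_lt (by norm_num))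
    lia
  · rwa [show 2 * (i - 1) + 3 = 2 * i + 1 by lia]

lemma exists_prime_squarefree_sub_of_le {n : ℕ} (hn : 3 < n) (hne : Even n) (hnN : n ≤ 2 ^ 19) :
    ∃ p ≤ n, p.Prime ∧ Odd p ∧ Squarefree (n - p) := by
  by_contra! hbad
  have hps : ∀ p ∈ [3, 5, 7, 11, 13, 17], p.Prime ∧ Odd p := by
    simp only [List.forall_mem_cons]
    norm_num
  have hbit : Nat.testBit 5 n := by
    rw [← exceptionMask_eq_five, testBit_exceptionMask, testBit_multiplesMask two_pos]
    refine ⟨⟨hne.two_dvd, by omega⟩, fun p hp hpn ↦ ?_⟩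
    obtain ⟨hprime, hodd⟩ := hps p hp
    exact testBit_sieveMask_oddSquares ((n.sub_le p).trans hnN) (Nat.Even.sub_odd hpn hne hodd)
      (hbad p hpn hprime hodd)
  have hlt : 5 < 2 ^ n := lt_of_lt_of_le (by norm_num) (Nat.pow_le_pow_right two_pos hn)
  rw [Nat.testBit_lt_two_pow hlt] at hbit
  exact Bool.false_ne_true hbit

/-! ### Primes in a residue class -/

/-- Chebyshev's function of the residue class of `a` modulo `D`: the sum of `log p` over the primes
`p ≤ x` with `p ≡ a` modulo `D`. -/
noncomputable def thetaMod (x D a : ℕ) : ℝ :=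
  ∑ p ∈ Nat.primesLE x with p ≡ a [MOD D], log p

/-- The constant that bounds, per term of the progression, the contribution to `thetaMod` of the
primes of a residue class modulo `D`. Its second summand accounts for the factors of a factorial
that are not coprime to `D`. -/
noncomputable def thetaModConst (D : ℕ) : ℝ :=
  log D + ∑ p ∈ D.primeFactors, log p / (p - 1)

lemma thetaModConst_nonneg (D : ℕ) : 0 ≤ thetaModConst D := by
  refine add_nonneg (log_natCast_nonneg D) (sum_nonneg fun p hp ↦ ?_)
  have hp : (1 : ℝ) ≤ p := Nat.one_le_cast.mpr (Nat.prime_of_mem_primeFactors hp).one_le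
  exact div_nonneg (log_nonneg hp) (sub_nonneg.mpr hp)

lemma prod_add_mul_le (D m : ℕ) {r : ℕ} (hr : r ≤ D) :
    ∏ j ∈ range m, (r + D * j) ≤ D ^ m * m.factorial := by
  calc ∏ j ∈ range m, (r + D * j) ≤ ∏ j ∈ range m, D * (j + 1) :=
        prod_le_prod' fun j _ ↦ by linarith
    _ = D ^ m * m.factorial := by
        rw [prod_mul_distrib, prod_const, card_range, prod_range_add_one_eq_factorial]

lemma dvd_prod_add_mul_of_dvd_factorial {m M D : ℕ} (hM : M ∣ m.factorial) (hD : D.Coprime M)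
    (r : ℕ) : M ∣ ∏ j ∈ range m, (r + D * j) := by
  obtain ⟨t, -, ht⟩ := Nat.exists_mul_mod_eq_of_coprime r hD
    (ne_zero_of_dvd_ne_zero m.factorial_ne_zero hM)
  have hmod : ∏ j ∈ range m, (r + D * j) ≡ ∏ j ∈ range m, D * (t + j) [MOD M] :=
    Nat.ModEq.prod fun j _ ↦ by
      rw [mul_add]
      exact Nat.ModEq.add_right _ ht.symm
  rw [hmod.dvd_iff dvd_rfl, prod_mul_distrib, ← Nat.ascFactorial_eq_prod_range]
  exact (hM.trans (t.factorial_dvd_ascFactorial m)).mul_left _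

lemma exists_factorial_eq_mul_coprime {D : ℕ} (hD : D ≠ 0) (m : ℕ) :
    ∃ S M : ℕ, m.factorial = S * M ∧ D.Coprime M ∧
      log S ≤ m * ∑ p ∈ D.primeFactors, log p / (p - 1) := by
  set v := m.factorial.factorization
  refine ⟨∏ p ∈ D.primeFactors, p ^ v p, ∏ p ∈ m.factorial.primeFactors \ D.primeFactors, p ^ v p,
    ?_, Nat.Coprime.prod_right fun p hp ↦ Nat.Coprime.pow_right _ ?_, ?_⟩
  · have hinter : ∏ p ∈ m.factorial.primeFactors ∩ D.primeFactors, p ^ v p =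
        ∏ p ∈ D.primeFactors, p ^ v p := by
      refine prod_subset inter_subset_right fun p hp hpm ↦ ?_
      have hv : v p = 0 := Finsupp.notMem_support_iff.mp fun h ↦ hpm (mem_inter.mpr ⟨h, hp⟩)
      rw [hv, pow_zero]
    rw [← hinter, prod_inter_mul_prod_sdiff]
    exact (Nat.prod_factorization_pow_eq_self m.factorial_ne_zero).symm
  · obtain ⟨hpm, hpD⟩ := mem_sdiff.mp hp
    have hp := Nat.prime_of_mem_primeFactors hpm
    exact (hp.coprime_iff_not_dvd.mpr fun h ↦ hpD (hp.mem_primeFactors h hD)).symm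
  · push_cast
    rw [log_prod fun p hp ↦ pow_ne_zero _
      (Nat.cast_ne_zero.mpr (Nat.prime_of_mem_primeFactors hp).ne_zero), mul_sum]
    refine sum_le_sum fun p hp ↦ ?_
    have hp := Nat.prime_of_mem_primeFactors hp
    have hv : (v p : ℝ) ≤ m / (p - 1) := by
      rw [← Nat.cast_pred hp.pos]
      exact (Nat.cast_le.mpr (Nat.factorization_factorial_le_div_pred hp m)).trans
        Nat.cast_div_le
    calc log (p ^ v p) = v p * log p := log_pow _ _
      _ ≤ m / (p - 1) * log p := by gcongr
      _ = m * (log p / (p - 1)) := by ring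

lemma prod_primes_progression_le_s2 {D r m S M : ℕ} (hr : 0 < r) (hrD : r ≤ D)
    (hSM : m.factorial = S * M) (hDM : D.Coprime M) :
    ∏ p ∈ (range m).image (fun j ↦ r + D * j) with p.Prime ∧ m < p, p ≤ D ^ m * S := by
  set T := (range m).image fun j ↦ r + D * j
  have hM : 0 < M := Nat.pos_of_ne_zero (right_ne_zero_of_mul (hSM ▸ m.factorial_ne_zero))
  have hprodT : ∏ p ∈ T, p = ∏ j ∈ range m, (r + D * j) :=
    prod_image fun i _ j _ h ↦ Nat.eq_of_mul_eq_mul_left (hr.trans_le hrD) (Nat.add_left_cancel h)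
  have hM_dvd : M ∣ ∏ p ∈ T, p := by
    rw [hprodT]
    exact dvd_prod_add_mul_of_dvd_factorial (Dvd.intro_left S hSM.symm) hDM r
  have hcoprime : (∏ p ∈ T with p.Prime ∧ m < p, p).Coprime M := by
    refine Nat.Coprime.prod_left fun p hp ↦ ?_
    obtain ⟨-, hp, hmp⟩ := mem_filter.mp hp
    exact (hp.coprime_factorial_of_lt hmp).of_dvd_right (Dvd.intro_left S hSM.symm)
  have hpos : 0 < ∏ p ∈ T, p := by
    rw [hprodT]
    exact prod_pos fun j _ ↦ by positivity
  refine Nat.le_of_mul_le_mul_right ?_ hM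
  calc (∏ p ∈ T with p.Prime ∧ m < p, p) * M ≤ ∏ p ∈ T, p :=
        Nat.le_of_dvd hpos (hcoprime.mul_dvd_of_dvd_of_dvd
          (prod_dvd_prod_of_subset _ _ _ (filter_subset _ _)) hM_dvd)
    _ ≤ D ^ m * m.factorial := hprodT ▸ prod_add_mul_le D m hrD
    _ = D ^ m * S * M := by rw [hSM, mul_assoc]

lemma exists_pos_le_modEq {D : ℕ} (hD : 0 < D) (a : ℕ) : ∃ r, 0 < r ∧ r ≤ D ∧ r ≡ a [MOD D] := by
  rcases (a % D).eq_zero_or_pos with h | h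
  · exact ⟨D, hD, le_rfl, by rw [Nat.ModEq, Nat.mod_self, h]⟩
  · exact ⟨a % D, h, (Nat.mod_lt a hD).le, Nat.mod_modEq a D⟩

lemma thetaMod_mono (D a : ℕ) : Monotone fun x ↦ thetaMod x D a := fun _ _ hxy ↦
  sum_le_sum_of_subset_of_nonneg (filter_subset_filter _ (Nat.primesLE_mono hxy))
    fun p _ _ ↦ log_natCast_nonneg p

lemma thetaMod_le_log_four_mul (x D a : ℕ) : thetaMod x D a ≤ log 4 * x := by
  calc thetaMod x D a ≤ ∑ p ∈ Nat.primesLE x, log p :=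
        sum_le_sum_of_subset_of_nonneg (filter_subset _ _) fun p _ _ ↦ log_natCast_nonneg p
    _ = Chebyshev.theta x := (Chebyshev.theta_eq_sum_primesLE_log x).symm
    _ ≤ log 4 * x := Chebyshev.theta_le_log4_mul_x x.cast_nonneg

lemma exists_lt_add_mul_eq {D m r p : ℕ} (hr : 0 < r) (hrD : r ≤ D) (hp : 0 < p)
    (hpr : p ≡ r [MOD D]) (hpm : p ≤ D * m) : ∃ j < m, r + D * j = p := by
  have hrp : r ≤ p := by
    by_contra! hlt
    have hle := Nat.le_of_dvd (Nat.sub_pos_of_lt hlt) ((Nat.modEq_iff_dvd' hlt.le).mp hpr)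
    omega
  obtain ⟨j, hj⟩ := (Nat.modEq_iff_dvd' hrp).mp hpr.symm
  refine ⟨j, lt_of_mul_lt_mul_left (a := D) ?_ D.zero_le, ?_⟩ <;> omega

lemma thetaMod_mul_le {D : ℕ} (hD : 0 < D) (m a : ℕ) :
    thetaMod (D * m) D a ≤ m * thetaModConst D + thetaMod m D a := by
  obtain ⟨r, hr, hrD, hra⟩ := exists_pos_le_modEq hD a
  obtain ⟨S, M, hSM, hDM, hS⟩ := exists_factorial_eq_mul_coprime hD.ne' m
  have hS0 : S ≠ 0 := left_ne_zero_of_mul (hSM ▸ m.factorial_ne_zero)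
  have hsmall : ∑ p ∈ Nat.primesLE (D * m) with p ≡ a [MOD D] ∧ p ≤ m, log p ≤ thetaMod m D a :=
    sum_le_sum_of_subset_of_nonneg (fun p ↦ by
      simp only [mem_filter, Nat.mem_primesLE]
      tauto) fun p _ _ ↦ log_natCast_nonneg p
  have hlarge : ∑ p ∈ Nat.primesLE (D * m) with p ≡ a [MOD D] ∧ ¬p ≤ m, log p ≤
      m * thetaModConst D := by
    set T := (range m).image fun j ↦ r + D * j
    have hprime : ∀ p ∈ T.filter fun p ↦ p.Prime ∧ m < p, p.Prime := fun p hp ↦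
      (mem_filter.mp hp).2.1
    calc _ ≤ ∑ p ∈ T with p.Prime ∧ m < p, log p := by
          refine sum_le_sum_of_subset_of_nonneg (fun p hp ↦ ?_) fun p _ _ ↦ log_natCast_nonneg p
          obtain ⟨hpx, hpa, hpm⟩ := mem_filter.mp hp
          obtain ⟨hpD, hp⟩ := Nat.mem_primesLE.mp hpx
          obtain ⟨j, hj, rfl⟩ := exists_lt_add_mul_eq hr hrD hp.pos (hpa.trans hra.symm) hpD
          exact mem_filter.mpr ⟨mem_image.mpr ⟨j, mem_range.mpr hj, rfl⟩, hp, not_le.mp hpm⟩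
      _ = log (∏ p ∈ T with p.Prime ∧ m < p, p : ℕ) := by
          rw [Nat.cast_prod, log_prod fun p hp ↦ Nat.cast_ne_zero.mpr (hprime p hp).ne_zero]
      _ ≤ log (D ^ m * S : ℕ) := by
          gcongr
          · exact_mod_cast prod_pos fun p hp ↦ (hprime p hp).pos
          · exact prod_primes_progression_le_s2 hr hrD hSM hDM
      _ = m * log D + log S := by
          push_cast
          rw [log_mul (by positivity) (by positivity), log_pow]
      _ ≤ m * thetaModConst D := by
          rw [thetaModConst, mul_add]
          gcongr
  rw [thetaMod, ← sum_filter_add_sum_filter_not _ (· ≤ m), filter_filter, filter_filter, add_comm]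
  exact add_le_add hlarge hsmall

lemma thetaMod_le {D : ℕ} (hD : 0 < D) (x a : ℕ) :
    thetaMod x D a ≤ (x / D + 1) * thetaModConst D +
      (x / D ^ 2 + 1) * (thetaModConst D + log 4) := by
  have hc : 0 ≤ thetaModConst D := thetaModConst_nonneg D
  set m := x / D + 1 with hm
  set k := x / D ^ 2 + 1 with hk
  have hxm : x ≤ D * m := (Nat.lt_mul_div_succ x hD).le
  have hmk : m ≤ D * k := by
    rw [hm, hk, sq, ← Nat.div_div_eq_div_mul]
    exact Nat.lt_mul_div_succ (x / D) hD
  calc thetaMod x D a ≤ thetaMod (D * m) D a := thetaMod_mono D a hxm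
    _ ≤ m * thetaModConst D + thetaMod (D * k) D a :=
        (thetaMod_mul_le hD m a).trans (by gcongr; exact thetaMod_mono D a hmk)
    _ ≤ m * thetaModConst D + (k * thetaModConst D + log 4 * k) := by
        gcongr
        exact (thetaMod_mul_le hD k a).trans (by gcongr; exact thetaMod_le_log_four_mul k D a)
    _ = m * thetaModConst D + k * (thetaModConst D + log 4) := by ring
    _ ≤ (x / D + 1) * thetaModConst D + (x / D ^ 2 + 1) * (thetaModConst D + log 4) := by
        gcongr
        · rw [hm]; push_cast; gcongr; exact Nat.cast_div_le
        · rw [hk]; push_cast; gcongr; exact_mod_cast Nat.cast_div_le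

/-! ### The weights of the odd primes -/

/-- The weight of an odd prime `q`: the main term, per unit of `x`, of the bound for `thetaMod x` on
a residue class modulo `2 * q ^ 2`. The constant `9 / 8` is just large enough for `q = 3`. -/
noncomputable def classWeight (q : ℕ) : ℝ := (log q + 9 / 8) / q ^ 2

/-- The odd primes up to `s`. -/
def oddPrimesLE (s : ℕ) : Finset ℕ := (Nat.primesLE s).erase 2

lemma mem_oddPrimesLE {s q : ℕ} : q ∈ oddPrimesLE s ↔ q ≤ s ∧ q.Prime ∧ Odd q := by
  rw [oddPrimesLE, mem_erase, Nat.mem_primesLE]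
  constructor
  · rintro ⟨hq2, hqs, hq⟩
    exact ⟨hqs, hq, hq.odd_of_ne_two hq2⟩
  · rintro ⟨hqs, hq, hodd⟩
    exact ⟨hodd.ne_two_of_dvd_nat dvd_rfl, hqs, hq⟩

lemma thetaModConst_two_mul_sq {q : ℕ} (hq : q.Prime) (hodd : Odd q) :
    thetaModConst (2 * q ^ 2) = 2 * log 2 + 2 * log q + log q / (q - 1) := by
  have hq0 : q ≠ 0 := hq.ne_zero
  have hfactors : (2 * q ^ 2).primeFactors = {2, q} := by
    rw [Nat.primeFactors_mul two_ne_zero (pow_ne_zero 2 hq0), Nat.prime_two.primeFactors,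
      Nat.primeFactors_prime_pow two_ne_zero hq, singleton_union]
  rw [thetaModConst, hfactors, sum_pair (hodd.ne_two_of_dvd_nat dvd_rfl).symm]
  push_cast
  rw [log_mul two_ne_zero (by positivity), log_pow]
  push_cast
  ring

lemma log_le_div_add_log_sub_one {x y : ℝ} (hx : 0 < x) (hy : 0 < y) :
    log y ≤ y / x + log x - 1 := by
  have h := log_le_sub_one_of_pos (div_pos hy hx)
  rw [log_div hy.ne' hx.ne'] at h
  linarith

-- At `x = 3` the left-hand side is about `0.5493`.
lemma log_div_sub_one_le {x : ℝ} (hx : 3 ≤ x) : log x / (x - 1) ≤ 0.5494 := by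
  have h := log_le_div_add_log_sub_one three_pos (three_pos.trans_le hx)
  rw [div_le_iff₀ (by linarith)]
  linarith [log_three_lt_d9]

lemma three_le_of_prime_of_odd {q : ℕ} (hq : q.Prime) (hodd : Odd q) : 3 ≤ q :=
  hq.two_le.lt_of_ne (hodd.ne_two_of_dvd_nat dvd_rfl).symm

lemma two_mul_thetaModConst_two_mul_sq_le {q : ℕ} (hq : q.Prime) (hodd : Odd q) :
    2 * thetaModConst (2 * q ^ 2) + log 4 ≤ 4 * log q + 5.5 := by
  have hlog := log_div_sub_one_le (x := q) (mod_cast three_le_of_prime_of_odd hq hodd)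
  rw [thetaModConst_two_mul_sq hq hodd, log_four_eq]
  linarith [log_two_lt_d9]

lemma thetaModConst_two_mul_sq_div_le {q : ℕ} (hq : q.Prime) (hodd : Odd q) :
    thetaModConst (2 * q ^ 2) / (2 * q ^ 2) +
      (thetaModConst (2 * q ^ 2) + log 4) / (2 * q ^ 2) ^ 2 ≤ classWeight q := by
  have hq3 : (3 : ℝ) ≤ q := mod_cast three_le_of_prime_of_odd hq hodd
  have hu := log_div_sub_one_le hq3
  rw [thetaModConst_two_mul_sq hq hodd, log_four_eq, classWeight]
  set L := log q
  set u := L / (q - 1)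
  have hL : L ≤ 0.5494 * (q - 1) := (div_le_iff₀ (by linarith)).mp hu
  have hL_sq : 9 * L ≤ 1.0988 * q ^ 2 := by nlinarith
  have hcore : log 2 + L / 2 + u / 4 ≤ (9 / 8 - log 2 - u / 2) * q ^ 2 := by
    nlinarith [log_two_lt_d9]
  calc (2 * log 2 + 2 * L + u) / (2 * q ^ 2) +
        (2 * log 2 + 2 * L + u + 2 * log 2) / (2 * q ^ 2) ^ 2
      = (log 2 + L + u / 2) / q ^ 2 + (log 2 + L / 2 + u / 4) / (q ^ 2) ^ 2 := by
        field_simp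
        ring
    _ ≤ (log 2 + L + u / 2) / q ^ 2 + (9 / 8 - log 2 - u / 2) * q ^ 2 / (q ^ 2) ^ 2 := by gcongr
    _ = (L + 9 / 8) / q ^ 2 := by
        field_simp
        ring

lemma thetaMod_two_mul_sq_le {q : ℕ} (hq : q.Prime) (hodd : Odd q) (x a : ℕ) :
    thetaMod x (2 * q ^ 2) a ≤ x * classWeight q + (4 * log q + 5.5) := by
  have h := thetaMod_le (D := 2 * q ^ 2) (mul_pos two_pos (pow_pos hq.pos 2)) x a
  push_cast at h
  set c := thetaModConst (2 * q ^ 2)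
  calc thetaMod x (2 * q ^ 2) a
      ≤ x * (c / (2 * q ^ 2) + (c + log 4) / (2 * q ^ 2) ^ 2) + (2 * c + log 4) := by
        linear_combination h
    _ ≤ x * classWeight q + (4 * log q + 5.5) := by
        refine add_le_add (mul_le_mul_of_nonneg_left ?_ x.cast_nonneg) ?_
        · exact thetaModConst_two_mul_sq_div_le hq hodd
        · exact two_mul_thetaModConst_two_mul_sq_le hq hodd

lemma classWeight_nonneg (q : ℕ) : 0 ≤ classWeight q := by
  have := log_natCast_nonneg q
  unfold classWeight
  positivity

lemma log_add_div_sq_le {x y b : ℝ} (hx : 0 < x) (hy : 0 < y) (hxy : x ≤ y * (log x + b)) :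
    (x - y) * ((log x + b) / x ^ 2) ≤ (log y + (b + 1)) / y - (log x + (b + 1)) / x := by
  have hlog : log x - x / y + 1 ≤ log y := by linarith [log_le_div_add_log_sub_one hy hx]
  calc (x - y) * ((log x + b) / x ^ 2)
      ≤ (x - y) * ((log x + b) / x ^ 2) +
          (x - y) ^ 2 * (y * (log x + b) - x) / (x ^ 2 * y ^ 2) := by
        have := sub_nonneg.mpr hxy
        exact le_add_of_nonneg_right (by positivity)
    _ = (log x - x / y + 1 + (b + 1)) / y - (log x + (b + 1)) / x := by
        field_simp
        ring
    _ ≤ (log y + (b + 1)) / y - (log x + (b + 1)) / x := by gcongr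

lemma classWeight_add_two_le {k : ℕ} (hk : 3 ≤ k) :
    classWeight (k + 2) ≤
      (log k + 17 / 8) / (2 * k) - (log (k + 2 : ℕ) + 17 / 8) / (2 * (k + 2 : ℕ)) := by
  have hk3 : (3 : ℝ) ≤ k := mod_cast hk
  have hlog : 1 ≤ log (k + 2 : ℝ) :=
    (le_log_iff_exp_le (by linarith)).mpr (by linarith [exp_one_lt_three])
  have h := log_add_div_sq_le (x := k + 2) (y := k) (b := 9 / 8) (by linarith) (by linarith)
    (by nlinarith)
  rw [add_sub_cancel_left, show (9 / 8 + 1 : ℝ) = 17 / 8 by norm_num] at h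
  rw [classWeight, mul_comm, ← div_div, mul_comm, ← div_div]
  push_cast
  linarith

lemma sum_classWeight_le {a : ℕ} (ha : 3 ≤ a) (N : ℕ) :
    ∑ i ∈ range N, classWeight (a + 2 * (i + 1)) ≤ (log a + 17 / 8) / (2 * a) := by
  set F : ℕ → ℝ := fun k ↦ (log k + 17 / 8) / (2 * k)
  calc ∑ i ∈ range N, classWeight (a + 2 * (i + 1))
      ≤ ∑ i ∈ range N, (F (a + 2 * i) - F (a + 2 * (i + 1))) :=
        sum_le_sum fun i _ ↦ classWeight_add_two_le (ha.trans (Nat.le_add_right a (2 * i)))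
    _ = F a - F (a + 2 * N) := sum_range_sub' (fun i ↦ F (a + 2 * i)) N
    _ ≤ F a := sub_le_self _ (by
        have := log_natCast_nonneg (a + 2 * N)
        positivity)

lemma log_le_of_pow_le_pow {x y : ℝ} {a b : ℕ} (hx : 0 < x) (h : x ^ a ≤ y ^ b) :
    a * log x ≤ b * log y := by
  rw [← log_pow, ← log_pow]
  exact log_le_log (pow_pos hx a) h

lemma sum_classWeight_primes_lt_sixteen_le :
    ∑ q ∈ {3, 5, 7, 11, 13}, classWeight q ≤ 0.47088 := by
  have h7 := log_le_of_pow_le_pow (x := 7) (y := 2) (a := 6) (b := 17) (by norm_num) (by norm_num)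
  have h11 := log_le_of_pow_le_pow (x := 11) (y := 2) (a := 2) (b := 7) (by norm_num) (by norm_num)
  have h13 := log_le_of_pow_le_pow (x := 13) (y := 2) (a := 4) (b := 15) (by norm_num) (by norm_num)
  norm_num [classWeight] at h7 h11 h13 ⊢
  linarith [log_two_lt_d9, log_three_lt_d9, log_five_lt_d9]

lemma sum_classWeight_oddPrimesLE_le (s : ℕ) : ∑ q ∈ oddPrimesLE s, classWeight q ≤ 0.632 := by
  set T := (range s).image fun i ↦ 15 + 2 * (i + 1)
  have hsubset : oddPrimesLE s ⊆ {3, 5, 7, 11, 13} ∪ T := fun q hq ↦ by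
    obtain ⟨hqs, hq, i, rfl⟩ := mem_oddPrimesLE.mp hq
    rw [mem_union]
    rcases le_or_gt i 7 with hi | hi
    · left
      interval_cases i <;> revert hq <;> decide
    · right
      exact mem_image.mpr ⟨i - 8, mem_range.mpr (by lia), by lia⟩
  have hdisjoint : Disjoint {3, 5, 7, 11, 13} T := disjoint_right.mpr fun q hq ↦ by
    obtain ⟨i, -, rfl⟩ := mem_image.mp hq
    simp only [mem_insert, mem_singleton]
    lia
  have htail : (log (15 : ℕ) + 17 / 8) / (2 * (15 : ℕ)) ≤ (0.16111 : ℝ) := by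
    have hlog : log 15 = log 3 + log 5 := by
      rw [← log_mul three_ne_zero (by norm_num)]
      norm_num
    push_cast
    rw [hlog]
    linarith [log_three_lt_d9, log_five_lt_d9]
  calc ∑ q ∈ oddPrimesLE s, classWeight q ≤ ∑ q ∈ {3, 5, 7, 11, 13} ∪ T, classWeight q :=
        sum_le_sum_of_subset_of_nonneg hsubset fun q _ _ ↦ classWeight_nonneg q
    _ = ∑ q ∈ {3, 5, 7, 11, 13}, classWeight q +
          ∑ i ∈ range s, classWeight (15 + 2 * (i + 1)) := by
        rw [sum_union hdisjoint, sum_image fun i _ j _ h ↦ by lia]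
    _ ≤ 0.632 := by
        have hsum := sum_classWeight_le (a := 15) (by norm_num) s
        linarith [sum_classWeight_primes_lt_sixteen_le]

lemma sum_log_oddPrimesLE_le (s : ℕ) :
    ∑ q ∈ oddPrimesLE s, (4 * log q + 5.5) ≤ 11.1 * s := by
  have hsubset : oddPrimesLE s ⊆ Nat.primesLE s := erase_subset _ _
  have hlog : ∑ q ∈ oddPrimesLE s, log q ≤ 2 * log 2 * s := by
    calc ∑ q ∈ oddPrimesLE s, log q ≤ ∑ q ∈ Nat.primesLE s, log q :=
          sum_le_sum_of_subset_of_nonneg hsubset fun q _ _ ↦ log_natCast_nonneg q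
      _ = Chebyshev.theta s := (Chebyshev.theta_eq_sum_primesLE_log s).symm
      _ ≤ 2 * log 2 * s := log_four_eq ▸ Chebyshev.theta_le_log4_mul_x s.cast_nonneg
  have hcard : #(oddPrimesLE s) ≤ s := by
    calc #(oddPrimesLE s) ≤ #(Icc 1 s) := card_le_card fun q hq ↦ by
          obtain ⟨hqs, hq, -⟩ := mem_oddPrimesLE.mp hq
          exact mem_Icc.mpr ⟨hq.one_le, hqs⟩
      _ = s := by simp
  rw [sum_add_distrib, ← mul_sum, sum_const, nsmul_eq_mul]
  have hcard : (#(oddPrimesLE s) : ℝ) ≤ s := mod_cast hcard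
  nlinarith [log_two_lt_d9, s.cast_nonneg (α := ℝ)]

lemma exists_modEq_of_not_squarefree_sub {n p : ℕ} (hn : Even n) (hpn : p ≤ n) (hp : Odd p)
    (h : ¬Squarefree (n - p)) :
    ∃ q ∈ oddPrimesLE n.sqrt, p ≡ n + q ^ 2 [MOD 2 * q ^ 2] := by
  have hodd : Odd (n - p) := Nat.Even.sub_odd hpn hn hp
  obtain ⟨q, hq, hqodd, t, ht⟩ := exists_odd_prime_sq_dvd_of_not_squarefree hodd h
  obtain ⟨j, rfl⟩ : Odd t := hodd.of_dvd_nat ⟨q ^ 2, by rw [ht, mul_comm]⟩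
  have hqn : q ≤ n.sqrt :=
    Nat.le_sqrt'.mpr ((Nat.le_of_dvd hodd.pos (Dvd.intro _ ht.symm)).trans (n.sub_le p))
  refine ⟨q, mem_oddPrimesLE.mpr ⟨hqn, hq, hqodd⟩, ?_⟩
  have hn_eq : n + q ^ 2 = p + (j + 1) * (2 * q ^ 2) := by
    rw [← Nat.sub_add_cancel hpn, ht]
    ring
  rw [hn_eq, Nat.modEq_add_mul_modulus_iff]

lemma theta_le_log_two_add_sum_thetaMod {n : ℕ} (hne : Even n)
    (hbad : ∀ p ≤ n, p.Prime → Odd p → ¬Squarefree (n - p)) :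
    Chebyshev.theta n ≤
      log 2 + ∑ q ∈ oddPrimesLE n.sqrt, thetaMod n (2 * q ^ 2) (n + q ^ 2) := by
  calc Chebyshev.theta n = ∑ p ∈ Nat.primesLE n, log p := Chebyshev.theta_eq_sum_primesLE_log n
    _ ≤ log 2 + ∑ p ∈ oddPrimesLE n, log p := by
        refine (sum_le_sum_of_subset_of_nonneg (insert_erase_subset 2 _)
          fun p _ _ ↦ log_natCast_nonneg p).trans_eq ?_
        rw [sum_insert (notMem_erase 2 _), Nat.cast_two, oddPrimesLE]
    _ ≤ log 2 + ∑ p ∈ oddPrimesLE n, ∑ q ∈ oddPrimesLE n.sqrt,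
          if p ≡ n + q ^ 2 [MOD 2 * q ^ 2] then log p else 0 := by
        gcongr with p hp
        obtain ⟨hpn, hprime, hodd⟩ := mem_oddPrimesLE.mp hp
        obtain ⟨q, hq, hpq⟩ := exists_modEq_of_not_squarefree_sub hne hpn hodd
          (hbad p hpn hprime hodd)
        refine (if_pos hpq).symm.trans_le (single_le_sum (f := fun q ↦
          if p ≡ n + q ^ 2 [MOD 2 * q ^ 2] then log (p : ℝ) else 0) (fun q _ ↦ ?_) hq)
        exact ite_nonneg (log_natCast_nonneg p) le_rfl
    _ ≤ log 2 + ∑ q ∈ oddPrimesLE n.sqrt, thetaMod n (2 * q ^ 2) (n + q ^ 2) := by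
        rw [sum_comm]
        simp_rw [← sum_filter]
        gcongr
        exact sum_le_sum_of_subset_of_nonneg (filter_subset_filter _ (erase_subset _ _))
          fun p _ _ ↦ log_natCast_nonneg p

lemma weight_bound_lt_theta_lower_bound {x s : ℝ} (hx : 2 ^ 19 ≤ x) (hs : s ≤ √x) :
    log 2 + (x * 0.632 + 11.1 * s) < x * log 2 - log (x + 1) - 2 * √x * log x := by
  set t := √x
  have ht724 : 724 ≤ t := le_sqrt_of_sq_le (by linarith)
  have hx_eq : x = t ^ 2 := (sq_sqrt (by linarith)).symm
  have hlogx : log x = 2 * log t := by rw [hx_eq, log_pow, Nat.cast_ofNat]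
  have hlogt : log t ≤ t / 512 + 9 * log 2 - 1 := by
    have h := log_le_div_add_log_sub_one (x := 2 ^ 9) (y := t) (by norm_num) (by linarith)
    rw [log_pow] at h
    norm_num at h
    exact h
  have hlogx1 : log (x + 1) ≤ log x + 1 := by
    have h := log_le_div_add_log_sub_one (x := x) (y := x + 1) (by linarith) (by linarith)
    have : (x + 1) / x ≤ 2 := by
      rw [div_le_iff₀ (by linarith)]
      linarith
    linarith
  have hlinear : 11.1 + 4 * log t ≤ 0.061 * t := by linarith [log_two_lt_d9]
  have hquadratic := mul_le_mul_of_nonneg_left hlinear (by linarith : 0 ≤ t)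
  rw [hlogx] at hlogx1 ⊢
  rw [hx_eq] at hlogx1 ⊢
  nlinarith [log_two_gt_d9, log_two_lt_d9]

lemma exists_prime_squarefree_sub_of_ge {n : ℕ} (hne : Even n) (hn : 2 ^ 19 ≤ n) :
    ∃ p ≤ n, p.Prime ∧ Odd p ∧ Squarefree (n - p) := by
  by_contra! hbad
  have hupper : Chebyshev.theta n ≤ log 2 + (n * 0.632 + 11.1 * n.sqrt) := by
    calc Chebyshev.theta n
        ≤ log 2 + ∑ q ∈ oddPrimesLE n.sqrt, thetaMod n (2 * q ^ 2) (n + q ^ 2) :=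
          theta_le_log_two_add_sum_thetaMod hne hbad
      _ ≤ log 2 + ∑ q ∈ oddPrimesLE n.sqrt, (n * classWeight q + (4 * log q + 5.5)) := by
          gcongr with q hq
          obtain ⟨-, hq, hodd⟩ := mem_oddPrimesLE.mp hq
          exact thetaMod_two_mul_sq_le hq hodd n (n + q ^ 2)
      _ ≤ log 2 + (n * 0.632 + 11.1 * n.sqrt) := by
          rw [sum_add_distrib, ← mul_sum]
          gcongr
          · exact sum_classWeight_oddPrimesLE_le n.sqrt
          · exact sum_log_oddPrimesLE_le n.sqrt
  have hlower := Chebyshev.theta_ge n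
  have hgap := weight_bound_lt_theta_lower_bound (x := n) (s := n.sqrt) (by exact_mod_cast hn)
    nat_sqrt_le_real_sqrt
  linarith

/-- Every even integer greater than three can be written as the sum of a prime and an
odd square-free number. -/
theorem prime_add_odd_squarefree (n : ℕ) (hn : 3 < n) (hne : Even n) :
    ∃ p k : ℕ, p.Prime ∧ Squarefree k ∧ Odd k ∧ n = p + k := by
  obtain ⟨p, hpn, hp, hodd, hsq⟩ : ∃ p ≤ n, p.Prime ∧ Odd p ∧ Squarefree (n - p) := by
    rcases le_total n (2 ^ 19) with hle | hge
    · exact exists_prime_squarefree_sub_of_le hn hne hle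
    · exact exists_prime_squarefree_sub_of_ge hne hge
  exact ⟨p, n - p, hp, hsq, Nat.Even.sub_odd hpn hne hodd, (Nat.add_sub_cancel' hpn).symm⟩
end
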